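/- arXiv:1306.4599 — 2 statements merged into one kernel-verified Lean document; each statement's English description precedes it below -/
import Mathlib

section
/- Let A be a noetherian ring and F : Mod_A → Ab an additive half-exact functor. Then F is bounded if and only if F is weakly bounded, i.e., F(M) is finitely generated for every finitely generated A-module M if and only if F(A/p) is a finitely generated A/p-module for every prime ideal p of A. -/
/-!
Statement 7: Let `A` be a noetherian ring and `F : Mod_A → Ab` an additive half-exact
functor (encoded as an additive `A`-linear functor `ModuleCat A ⥤ ModuleCat A`).  Then
`F` is bounded if and only if `F` is weakly bounded: `F(M)` is finitely generated for
every finitely generated `A`-module `M` if and only if `F(A/p)` is finitely generated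
(equivalently over `A` or over `A/p`, since `p` acts trivially) for every prime ideal
`p` of `A`.
-/

open CategoryTheory Limits

def IsHalfExact {A : Type} [CommRing A] (F : ModuleCat A ⥤ ModuleCat A) : Prop :=
  ∀ (M N P : ModuleCat A) (f : M ⟶ N) (g : N ⟶ P),
    Function.Injective f → Function.Surjective g → Function.Exact f g →
      Function.Exact (F.map f) (F.map g)

/-!
If `F` is half-exact and `P` is a Serre class, the modules `M` such that `F(M)` belongs to `P` are
closed under extensions.  Over a noetherian ring every finitely generated module is an iterated
extension of modules `A/p`, so it is enough to know that each `F(A/p)` belongs to `P`.  Boundedness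
is the case where `P` is the Serre class of finitely generated modules.
-/

universe v u v' u'

section ObjectProperty

variable {C : Type u} [Category.{v} C] {D : Type u'} [Category.{v'} D]

theorem isClosedUnderIsomorphisms_of_isClosedUnderExtensions [Preadditive C]
    (P : ObjectProperty C) [P.ContainsZero] [P.IsClosedUnderExtensions] :
    P.IsClosedUnderIsomorphisms where
  of_iso {X Y} e hX := by
    obtain ⟨Z, isZero_Z, hZ⟩ := P.exists_prop_of_containsZero
    have : HasZeroObject C := ⟨Z, isZero_Z⟩
    let S : ShortComplex C := ShortComplex.mk e.hom (0 : Y ⟶ Z) comp_zero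
    have hS : S.ShortExact :=
      (ShortComplex.Splitting.ofIsIsoOfIsZero S (inferInstanceAs (IsIso e.hom)) isZero_Z).shortExact
    exact P.prop_X₂_of_shortExact hS hX hZ

theorem isClosedUnderExtensions_inverseImage [HasZeroMorphisms C] [Abelian D]
    (P : ObjectProperty D) [P.IsSerreClass] (F : C ⥤ D) [F.PreservesZeroMorphisms]
    (hF : ∀ S : ShortComplex C, S.ShortExact → (S.map F).Exact) :
    (P.inverseImage F).IsClosedUnderExtensions where
  prop_X₂_of_shortExact hS h₁ h₃ := P.prop_X₂_of_exact (hF _ hS) h₁ h₃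

end ObjectProperty

instance isSerreClass_isFG (R : Type u) [Ring R] [IsNoetherianRing R] :
    (ModuleCat.isFG.{v} R).IsSerreClass where
  exists_zero := ⟨.of R PUnit, ModuleCat.isZero_of_subsingleton _,
    inferInstanceAs (Module.Finite R PUnit.{v + 1})⟩
  prop_of_mono f hf hN := by
    rw [ModuleCat.mono_iff_injective] at hf
    rw [ModuleCat.isFG_iff] at hN ⊢
    exact Module.Finite.of_injective f.hom hf
  prop_of_epi f hf hM := by
    rw [ModuleCat.epi_iff_surjective] at hf
    rw [ModuleCat.isFG_iff] at hM ⊢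
    exact Module.Finite.of_surjective f.hom hf
  prop_X₂_of_shortExact {S} hS h₁ h₃ := by
    rw [ModuleCat.isFG_iff] at h₁ h₃ ⊢
    have hfg : Function.Exact S.f.hom S.g.hom :=
      (ShortComplex.ShortExact.moduleCat_exact_iff_function_exact S).mp hS.exact
    exact Module.Finite.of_exact hfg hS.moduleCat_surjective_g

theorem isFG_le_iff_forall_quotient_prime {A : Type u} [CommRing A] [IsNoetherianRing A]
    (P : ObjectProperty (ModuleCat.{u} A)) [P.ContainsZero] [P.IsClosedUnderExtensions] :
    ModuleCat.isFG A ≤ P ↔ ∀ p : Ideal A, p.IsPrime → P (ModuleCat.of A (A ⧸ p)) := by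
  have := isClosedUnderIsomorphisms_of_isClosedUnderExtensions P
  refine ⟨fun h p _ ↦ h _ (inferInstanceAs (Module.Finite A (A ⧸ p))), fun h M hM ↦ ?_⟩
  obtain ⟨M⟩ := M
  change Module.Finite A M at hM
  induction hM using IsNoetherianRing.induction_on_isQuotientEquivQuotientPrime A with
  | subsingleton N => exact P.prop_of_isZero (ModuleCat.isZero_of_subsingleton _)
  | quotient N p e => exact P.prop_of_iso e.toModuleIso.symm (h p.asIdeal p.isPrime)
  | exact N₁ N₂ N₃ f g hf hg hfg h₁ h₃ =>
    let S := ModuleCat.shortComplexOfCompEqZero f g hfg.linearMap_comp_eq_zero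
    have hS : S.ShortExact := ModuleCat.shortComplex_shortExact S hfg hf hg
    exact P.prop_X₂_of_shortExact hS h₁ h₃

theorem statement_7_general {A : Type u} [CommRing A] [IsNoetherianRing A]
    {C : Type u'} [Category.{v'} C] [Abelian C] (P : ObjectProperty C) [P.IsSerreClass]
    (F : ModuleCat.{u} A ⥤ C) [F.PreservesZeroMorphisms]
    (hF : ∀ S : ShortComplex (ModuleCat.{u} A), S.ShortExact → (S.map F).Exact) :
    (∀ M : ModuleCat.{u} A, Module.Finite A M → P (F.obj M)) ↔
      (∀ p : Ideal A, p.IsPrime → P (F.obj (ModuleCat.of A (A ⧸ p)))) :=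
  have := isClosedUnderExtensions_inverseImage P F hF
  isFG_le_iff_forall_quotient_prime (P.inverseImage F)

theorem IsHalfExact.map_exact {A : Type} [CommRing A] {F : ModuleCat A ⥤ ModuleCat A}
    [F.PreservesZeroMorphisms] (hF : IsHalfExact F) (S : ShortComplex (ModuleCat A))
    (hS : S.ShortExact) : (S.map F).Exact :=
  ModuleCat.shortComplex_exact (S.map F) <|
    hF _ _ _ S.f S.g hS.moduleCat_injective_f hS.moduleCat_surjective_g <|
      (ShortComplex.ShortExact.moduleCat_exact_iff_function_exact S).mp hS.exact

theorem statement_7 {A : Type} [CommRing A] [IsNoetherianRing A]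
    (F : ModuleCat A ⥤ ModuleCat A) [F.Additive] [F.Linear A]
    (hhe : IsHalfExact F) :
    (∀ M : ModuleCat A, Module.Finite A M → Module.Finite A (F.obj M)) ↔
      (∀ p : Ideal A, p.IsPrime → Module.Finite A (F.obj (ModuleCat.of A (A ⧸ p)))) :=
  statement_7_general (ModuleCat.isFG A) F hhe.map_exact
end

section
/- Let T be a scheme, t ∈ |T| a point of finite type (Spec κ(t) → T of finite type). Then t is locally closed in |T|: there exists an open subscheme U ⊆ T containing t such that t is a closed point of U. Furthermore, if f : X → Y is a morphism of schemes of finite type and x ∈ |X| is of finite type, then f(x) ∈ |Y| is of finite type. -/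
/-!
Statement 17: Let `T` be a scheme and `t ∈ |T|` a point of finite type (i.e.
`Spec κ(t) → T` is locally of finite type).  Then `t` is locally closed: there is an
open `U ⊆ T` containing `t` in which `t` is closed.  Furthermore, if `f : X → Y` is a
morphism of schemes (locally) of finite type and `x ∈ |X|` is of finite type, then
`f(x) ∈ |Y|` is of finite type.
-/

open CategoryTheory AlgebraicGeometry

/-!
A point is of finite type if and only if it is locally closed. If `{x}` is locally closed, then
`Spec κ(x) ⟶ X` is an immersion. Conversely, the image of any `Spec K ⟶ X` locally of finite type
is locally closed: for a domain `A ⊆ K` with `K` of finite type over `A`, Zariski's lemma over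
`Frac A` shows that `K` is algebraic over `A`, hence integral over `A` after inverting some
`f ≠ 0`, so every nonzero prime of `A` contains `f`. Since this applies to any field `K`, it also
gives the stability under `f : X ⟶ Y`, through `Spec κ(x) ⟶ X ⟶ Y`.
-/

universe u

theorem isAlgebraic_of_finiteType_field (A K : Type*) [CommRing A] [Field K] [Algebra A K]
    [FaithfulSMul A K] [Algebra.FiniteType A K] : Algebra.IsAlgebraic A K := by
  have : IsDomain A := (FaithfulSMul.algebraMap_injective A K).isDomain (algebraMap A K)
  let L := FractionRing A
  let := FractionRing.liftAlgebra A K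
  have : Algebra.FiniteType L K := .of_restrictScalars_finiteType A L K
  have : Module.Finite L K := finite_of_finite_type_of_isJacobsonRing L K
  exact (IsFractionRing.comap_isAlgebraic_iff (K := L)).2 inferInstance

theorem exists_ne_zero_forall_exists_isIntegral_pow_smul (A B : Type*) [CommRing A]
    [NoZeroDivisors A] [CommRing B] [Algebra A B] [Algebra.IsAlgebraic A B]
    [Algebra.FiniteType A B] :
    ∃ f : A, f ≠ 0 ∧ ∀ z : B, ∃ n : ℕ, IsIntegral A (f ^ n • z) := by
  obtain ⟨s, hs⟩ := ‹Algebra.FiniteType A B›.out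
  obtain ⟨f, hf, hfs⟩ := Algebra.IsAlgebraic.exists_integral_multiples A s
  refine ⟨f, hf, fun z ↦ ?_⟩
  have hz : z ∈ Algebra.adjoin A (s : Set B) := hs ▸ Algebra.mem_top
  induction hz using Algebra.adjoin_induction with
  | mem z hz => exact ⟨1, by simpa only [pow_one] using hfs z hz⟩
  | algebraMap a => exact ⟨0, by simpa only [pow_zero, one_smul] using isIntegral_algebraMap⟩
  | add z w _ _ hz hw =>
    obtain ⟨n, hn⟩ := hz
    obtain ⟨m, hm⟩ := hw
    refine ⟨n + m, ?_⟩
    have hsplit : f ^ (n + m) • (z + w) = f ^ m • f ^ n • z + f ^ n • f ^ m • w := by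
      rw [smul_add, smul_smul, smul_smul, ← pow_add, ← pow_add, add_comm m n]
    exact hsplit ▸ (hn.smul _).add (hm.smul _)
  | mul z w _ _ hz hw =>
    obtain ⟨n, hn⟩ := hz
    obtain ⟨m, hm⟩ := hw
    exact ⟨n + m, by simpa only [smul_mul_smul_comm, ← pow_add] using hn.mul hm⟩

theorem mem_of_algebraMap_eq_algebraMap_mul {A B : Type*} [CommRing A] [CommRing B]
    [Algebra A B] [FaithfulSMul A B] {q : Ideal A} [q.IsPrime] {a b : A} {z : B}
    (hz : IsIntegral A z) (hb : b ∈ q) (h : algebraMap A B a = algebraMap A B b * z) : a ∈ q := by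
  let C := integralClosure A B
  have hker : (⊥ : Ideal C).comap (algebraMap A C) ≤ q := fun c hc ↦ by
    have hcB : algebraMap A B c = 0 := congrArg Subtype.val (Ideal.mem_comap.1 hc)
    exact (FaithfulSMul.algebraMap_eq_zero_iff A B).1 hcB ▸ q.zero_mem
  obtain ⟨Q, -, -, rfl⟩ := Ideal.exists_ideal_over_prime_of_isIntegral q (⊥ : Ideal C) hker
  have hC : algebraMap A C a = algebraMap A C b * ⟨z, hz⟩ := Subtype.ext h
  exact Ideal.mem_comap.2 (hC ▸ Q.mul_mem_right _ hb)

theorem isOpen_singleton_bot_of_finiteType_field (A K : Type*) [CommRing A] [IsDomain A] [Field K]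
    [Algebra A K] [FaithfulSMul A K] [Algebra.FiniteType A K] :
    IsOpen {(⊥ : PrimeSpectrum A)} := by
  have := isAlgebraic_of_finiteType_field A K
  obtain ⟨f, hf, hfK⟩ := exists_ne_zero_forall_exists_isIntegral_pow_smul A K
  suffices {⊥} = (PrimeSpectrum.basicOpen f : Set (PrimeSpectrum A)) from
    this ▸ (PrimeSpectrum.basicOpen f).isOpen
  refine Set.Subset.antisymm (Set.singleton_subset_iff.2 hf) fun q hfq ↦ ?_
  by_contra hq
  obtain ⟨b, hbq, hb⟩ := Submodule.exists_mem_ne_zero_of_ne_bot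
    fun h : q.asIdeal = ⊥ ↦ hq (PrimeSpectrum.ext h)
  obtain ⟨n, hn⟩ := hfK (algebraMap A K b)⁻¹
  have hbK : algebraMap A K b ≠ 0 := (FaithfulSMul.algebraMap_eq_zero_iff A K).not.2 hb
  have hfb : algebraMap A K (f ^ n) = algebraMap A K b * f ^ n • (algebraMap A K b)⁻¹ := by
    rw [mul_smul_comm, mul_inv_cancel₀ hbK, Algebra.algebraMap_eq_smul_one]
  exact hfq (q.isPrime.mem_of_pow_mem n (mem_of_algebraMap_eq_algebraMap_mul hn hbq hfb))

theorem isLocallyClosed_range_comap_of_finiteType_field {A K : Type*} [CommRing A] [Field K]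
    {φ : A →+* K} (hφ : φ.FiniteType) : IsLocallyClosed (Set.range (PrimeSpectrum.comap φ)) := by
  let p := RingHom.ker φ
  have : p.IsPrime := RingHom.ker_isPrime φ
  let ψ : A ⧸ p →+* K := RingHom.kerLift φ
  have hψ : ψ.FiniteType := .of_comp_finiteType (f := Ideal.Quotient.mk p) hφ
  algebraize [ψ]
  have : FaithfulSMul (A ⧸ p) K :=
    (faithfulSMul_iff_algebraMap_injective _ _).2 (RingHom.kerLift_injective φ)
  have hemb := PrimeSpectrum.isClosedEmbedding_comap_of_surjective (A ⧸ p)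
    (Ideal.Quotient.mk p) Ideal.Quotient.mk_surjective
  have hbot : PrimeSpectrum.comap φ ⊥ = PrimeSpectrum.comap (Ideal.Quotient.mk p) ⊥ := by
    ext1
    simp only [PrimeSpectrum.comap_asIdeal, PrimeSpectrum.asIdeal_bot, ← RingHom.ker_eq_comap_bot,
      Ideal.mk_ker, p]
  have hrange : Set.range (PrimeSpectrum.comap φ) =
      PrimeSpectrum.comap (Ideal.Quotient.mk p) '' {⊥} := by
    rw [Set.range_unique, Unique.default_eq ⊥, hbot, Set.image_singleton]
  rw [hrange]
  exact (isOpen_singleton_bot_of_finiteType_field (A ⧸ p) K).isLocallyClosed.image hemb.isInducing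
    hemb.isClosed_range.isLocallyClosed

theorem isLocallyClosed_range_of_locallyOfFiniteType_field {K : Type u} [Field K] {X : Scheme.{u}}
    (g : Spec (.of K) ⟶ X) [LocallyOfFiniteType g] : IsLocallyClosed (Set.range g) := by
  obtain ⟨R, j, _, hj, -⟩ := Scheme.exists_affine_mem_range_and_range_subset
    (TopologicalSpace.Opens.mem_top (g (IsLocalRing.closedPoint K)))
  have hgj : Set.range g ⊆ Set.range j := by
    rintro _ ⟨y, rfl⟩
    rwa [Subsingleton.elim (α := PrimeSpectrum K) y (IsLocalRing.closedPoint K)]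
  obtain ⟨φ, hlift⟩ := Spec.map_surjective (IsOpenImmersion.lift j g hgj)
  obtain rfl : Spec.map φ ≫ j = g := by rw [hlift, IsOpenImmersion.lift_fac]
  have hφ : φ.hom.FiniteType :=
    (HasRingHomProperty.Spec_iff (P := @LocallyOfFiniteType)).1 (locallyOfFiniteType_of_comp _ j)
  rw [Scheme.Hom.comp_base, TopCat.coe_comp, Set.range_comp]
  exact (isLocallyClosed_range_comap_of_finiteType_field hφ).image j.isOpenEmbedding.isInducing
    j.isOpenEmbedding.isOpen_range.isLocallyClosed

section FiniteTypePoints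

variable {X Y : Scheme.{u}}

theorem locallyOfFiniteType_fromSpecResidueField_iff {x : X} :
    LocallyOfFiniteType (X.fromSpecResidueField x) ↔ IsLocallyClosed {x} := by
  rw [← X.range_fromSpecResidueField x]
  constructor
  · intro _
    exact isLocallyClosed_range_of_locallyOfFiniteType_field (K := X.residueField x) _
  · intro hx
    have : IsImmersion (X.fromSpecResidueField x) := ⟨hx⟩
    infer_instance

theorem locallyOfFiniteType_fromSpecResidueField_apply (f : X ⟶ Y) [LocallyOfFiniteType f] (x : X)
    [LocallyOfFiniteType (X.fromSpecResidueField x)] :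
    LocallyOfFiniteType (Y.fromSpecResidueField (f x)) := by
  have hrange : Set.range (X.fromSpecResidueField x ≫ f) = {f x} := by
    rw [Scheme.Hom.comp_base, TopCat.coe_comp, Set.range_comp, X.range_fromSpecResidueField,
      Set.image_singleton]
  rw [locallyOfFiniteType_fromSpecResidueField_iff, ← hrange]
  exact isLocallyClosed_range_of_locallyOfFiniteType_field (K := X.residueField x) _

end FiniteTypePoints

theorem statement_17 {T : Scheme} (t : T)
    (ht : LocallyOfFiniteType (T.fromSpecResidueField t))
    {X Y : Scheme} (f : X ⟶ Y) [LocallyOfFiniteType f] (x : X)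
    (hx : LocallyOfFiniteType (X.fromSpecResidueField x)) :
    (∃ U : Set T, IsOpen U ∧ t ∈ U ∧ IsClosed {y : U | (y : T) = t}) ∧
    IsLocallyClosed ({t} : Set T) ∧
    LocallyOfFiniteType (Y.fromSpecResidueField (f.base x)) := by
  have htc : IsLocallyClosed {t} := locallyOfFiniteType_fromSpecResidueField_iff.1 ht
  exact ⟨⟨coborder {t}, htc.isOpen_coborder, subset_coborder rfl, isClosed_preimage_val_coborder⟩,
    htc, locallyOfFiniteType_fromSpecResidueField_apply f x⟩
end
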